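/- For every integer h ≥ 1 there exists a bi-Lipschitz embedding of T^ω_h into c₀ with distortion at most 2; in particular c_{c₀}(T^ω_h) ≤ 2. -/

import Mathlib

open Set Function Filter

open scoped ENNReal

attribute [local instance] Classical.propDecidable

noncomputable section

def LipUB {α β : Type*} (dα : α → α → ℝ) (dβ : β → β → ℝ) (f : α → β) (L : ℝ) : Prop :=
  ∀ a b : α, dβ (f a) (f b) ≤ L * dα a b

def CoLipUB {α β : Type*} (dα : α → α → ℝ) (dβ : β → β → ℝ) (f : α → β) (C : ℝ) : Prop :=
  ∀ a b : α, dα a b ≤ C * dβ (f a) (f b)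

def IsBiLipEmb {α β : Type*} (dα : α → α → ℝ) (dβ : β → β → ℝ) (f : α → β) : Prop :=
  Function.Injective f ∧ ∃ L C : ℝ, LipUB dα dβ f L ∧ CoLipUB dα dβ f C

def distortionSet (α β : Type*) (dα : α → α → ℝ) (dβ : β → β → ℝ) : Set ℝ :=
  {D | ∃ f : α → β, Function.Injective f ∧ ∃ L C : ℝ,
    LipUB dα dβ f L ∧ CoLipUB dα dβ f C ∧ D = L * C}

def cDist (α β : Type*) (dα : α → α → ℝ) (dβ : β → β → ℝ) : ℝ≥0∞ :=
  ⨅ D ∈ distortionSet α β dα dβ, ENNReal.ofReal D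
def lcpLen : List ℕ → List ℕ → ℕ
  | a :: x, b :: y => if a = b then lcpLen x y + 1 else 0
  | _, _ => 0

def treeDist (x y : List ℕ) : ℝ :=
  (x.length : ℝ) + (y.length : ℝ) - 2 * (lcpLen x y : ℝ)

def TreeOmega (h : ℕ) : Type := {x : List ℕ // x.length ≤ h}

def tDist (h : ℕ) : TreeOmega h → TreeOmega h → ℝ := fun x y => treeDist x.1 y.1

theorem lcp_le (x : List ℕ) : ∀ y, lcpLen x y ≤ x.length ∧ lcpLen x y ≤ y.length := by
  induction x with
  | nil => intro y; simp [lcpLen]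
  | cons a x ih =>
    intro y
    cases y with
    | nil => simp [lcpLen]
    | cons b y =>
      have := ih y
      simp only [lcpLen, List.length_cons]
      split_ifs <;> omega

theorem lcp_symm (x : List ℕ) : ∀ y, lcpLen x y = lcpLen y x := by
  induction x with
  | nil => intro y; cases y <;> simp [lcpLen]
  | cons a x ih =>
    intro y
    cases y with
    | nil => simp [lcpLen]
    | cons b y =>
      have := ih y
      simp only [lcpLen, this, eq_comm]

theorem lcp_prefix (x : List ℕ) : ∀ y v : List ℕ, v <+: x →
    (v <+: y ↔ v.length ≤ lcpLen x y) := by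
  induction x with
  | nil =>
    intro y v hv
    have : v = [] := by simpa using hv
    simp [this]
  | cons a x ih =>
    intro y v hv
    cases v with
    | nil => simp
    | cons c v =>
      obtain ⟨rfl, hv2⟩ := List.cons_prefix_cons.1 hv
      cases y with
      | nil => simp [lcpLen]
      | cons b y =>
        have := ih y v hv2
        rw [List.cons_prefix_cons, this]
        simp only [lcpLen, List.length_cons]
        split_ifs with h <;> simp [h]

def treeCoord (x v : List ℕ) : ℝ :=
  if v <+: x then (x.length : ℝ) - v.length + 1 else 0

theorem treeCoord_lip (x y v : List ℕ) : |treeCoord x v - treeCoord y v| ≤ treeDist x y := by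
  have h1 : (lcpLen x y : ℝ) ≤ x.length := by exact_mod_cast (lcp_le x y).1
  have h2 : (lcpLen x y : ℝ) ≤ y.length := by exact_mod_cast (lcp_le x y).2
  unfold treeCoord treeDist
  by_cases hx : v <+: x <;> by_cases hy : v <+: y
  · simp only [hx, hy, if_true]
    rw [abs_le]; constructor <;> linarith
  · have h3 : ((lcpLen x y : ℕ) : ℝ) + 1 ≤ v.length := by
      have := (lcp_prefix x y v hx).not.1 hy
      exact_mod_cast (by omega : lcpLen x y + 1 ≤ v.length)
    have h4 : (v.length : ℝ) ≤ x.length := by exact_mod_cast hx.length_le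
    simp only [hx, hy, if_true, if_false]
    rw [abs_le]; constructor <;> linarith
  · have h3 : ((lcpLen x y : ℕ) : ℝ) + 1 ≤ v.length := by
      have := (lcp_prefix y x v hy).not.1 hx
      rw [lcp_symm] at this
      exact_mod_cast (by omega : lcpLen x y + 1 ≤ v.length)
    have h4 : (v.length : ℝ) ≤ y.length := by exact_mod_cast hy.length_le
    simp only [hx, hy, if_true, if_false]
    rw [abs_le]; constructor <;> linarith
  · simp only [hx, hy, if_false]
    rw [abs_le]; constructor <;> linarith

theorem treeCoord_colip (x y : List ℕ) (hxy : y.length ≤ x.length) :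
    ∃ v, treeDist x y ≤ 2 * |treeCoord x v - treeCoord y v| := by
  have h1 := (lcp_le x y).1
  have hxy' : (y.length : ℝ) ≤ x.length := by exact_mod_cast hxy
  rcases h1.eq_or_lt with h | h
  · refine ⟨[], ?_⟩
    have : treeDist x y ≤ 0 := by
      unfold treeDist
      rw [h]; linarith
    exact this.trans (by positivity)
  · refine ⟨x.take (lcpLen x y + 1), ?_⟩
    have hl : (x.take (lcpLen x y + 1)).length = lcpLen x y + 1 := by
      rw [List.length_take]; omega
    have hx : x.take (lcpLen x y + 1) <+: x := List.take_prefix _ _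
    have hy : ¬ x.take (lcpLen x y + 1) <+: y := by
      rw [lcp_prefix x y _ hx, hl]; omega
    unfold treeCoord
    rw [if_pos hx, if_neg hy, hl]
    unfold treeDist
    push_cast
    have := le_abs_self ((x.length : ℝ) - (lcpLen x y + 1) + 1 - 0)
    linarith

theorem treeDist_symm (x y : List ℕ) : treeDist x y = treeDist y x := by
  unfold treeDist
  rw [lcp_symm]; ring

theorem treeCoord_colip' (x y : List ℕ) :
    ∃ v, treeDist x y ≤ 2 * |treeCoord x v - treeCoord y v| := by
  rcases le_total y.length x.length with h | h
  · exact treeCoord_colip x y h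
  · obtain ⟨v, hv⟩ := treeCoord_colip y x h
    exact ⟨v, by rwa [treeDist_symm, abs_sub_comm]⟩

theorem eq_of_treeDist (x y : List ℕ) (h : treeDist x y ≤ 0) : x = y := by
  unfold treeDist at h
  have h' : x.length + y.length ≤ 2 * lcpLen x y := by
    have : (x.length : ℝ) + y.length ≤ 2 * lcpLen x y := by linarith
    exact_mod_cast this
  have := lcp_le x y
  have hp : x <+: y := (lcp_prefix x y x (List.prefix_refl x)).2 (by omega)
  exact hp.eq_of_length (by omega)

def treeEmb (x : List ℕ) : ZeroAtInftyContinuousMap ℕ ℝ where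
  toFun n := treeCoord x ((Denumerable.eqv (List ℕ)).symm n)
  continuous_toFun := continuous_of_discreteTopology
  zero_at_infty' := by
    rw [Filter.cocompact_eq_cofinite]
    apply tendsto_const_nhds.congr'
    have hfin : {v : List ℕ | v <+: x}.Finite := by
      apply (List.finite_toSet x.inits).subset
      intro v hv
      exact (List.mem_inits v x).2 hv
    have hfin2 := hfin.preimage
      ((Denumerable.eqv (List ℕ)).symm.injective.injOn)
    filter_upwards [hfin2.compl_mem_cofinite] with n hn
    have hn' : ¬ ((Denumerable.eqv (List ℕ)).symm n <+: x) := hn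
    exact (if_neg hn').symm

theorem treeEmb_lip (x y : List ℕ) : dist (treeEmb x) (treeEmb y) ≤ treeDist x y := by
  rw [← ZeroAtInftyContinuousMap.dist_toBCF_eq_dist]
  rw [BoundedContinuousFunction.dist_le ((abs_nonneg _).trans (treeCoord_lip x y []))]
  intro n
  exact treeCoord_lip x y _

theorem treeEmb_colip (x y : List ℕ) : treeDist x y ≤ 2 * dist (treeEmb x) (treeEmb y) := by
  obtain ⟨v, hv⟩ := treeCoord_colip' x y
  refine hv.trans ?_
  rw [← ZeroAtInftyContinuousMap.dist_toBCF_eq_dist]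
  have := BoundedContinuousFunction.dist_coe_le_dist (f := (treeEmb x).toBCF)
    (g := (treeEmb y).toBCF) (Denumerable.eqv (List ℕ) v)
  have h2 : dist ((treeEmb x).toBCF (Denumerable.eqv (List ℕ) v))
      ((treeEmb y).toBCF (Denumerable.eqv (List ℕ) v)) = |treeCoord x v - treeCoord y v| := by
    change |treeCoord x ((Denumerable.eqv (List ℕ)).symm (Denumerable.eqv (List ℕ) v)) -
      treeCoord y ((Denumerable.eqv (List ℕ)).symm (Denumerable.eqv (List ℕ) v))| = _
    rw [Equiv.symm_apply_apply]
  linarith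

/-- for every `h ≥ 1` the tree `T^ω_h` embeds into `c₀` (the space
of real sequences vanishing at infinity with the sup norm) with distortion at
most 2; in particular `c_{c₀}(T^ω_h) ≤ 2`. -/
theorem tree_into_c0 (h : ℕ) (hh : 1 ≤ h) :
    (∃ (f : TreeOmega h → ZeroAtInftyContinuousMap ℕ ℝ) (L C : ℝ),
      Function.Injective f ∧
      LipUB (tDist h) (fun a b : ZeroAtInftyContinuousMap ℕ ℝ => dist a b) f L ∧
      CoLipUB (tDist h) (fun a b : ZeroAtInftyContinuousMap ℕ ℝ => dist a b) f C ∧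
      L * C ≤ 2) ∧
    cDist (TreeOmega h) (ZeroAtInftyContinuousMap ℕ ℝ) (tDist h)
      (fun a b : ZeroAtInftyContinuousMap ℕ ℝ => dist a b) ≤ 2 := by
  have hinj : Function.Injective (fun x : TreeOmega h => treeEmb x.1) := by
    intro x y hxy
    apply Subtype.ext
    apply eq_of_treeDist
    have := treeEmb_colip x.1 y.1
    have h0 : dist (treeEmb x.1) (treeEmb y.1) = 0 := dist_eq_zero.2 hxy
    linarith
  have hL : LipUB (tDist h) (fun a b : ZeroAtInftyContinuousMap ℕ ℝ => dist a b)
      (fun x : TreeOmega h => treeEmb x.1) 1 := by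
    intro a b
    rw [one_mul]
    exact treeEmb_lip a.1 b.1
  have hC : CoLipUB (tDist h) (fun a b : ZeroAtInftyContinuousMap ℕ ℝ => dist a b)
      (fun x : TreeOmega h => treeEmb x.1) 2 := fun a b => treeEmb_colip a.1 b.1
  refine ⟨⟨_, 1, 2, hinj, hL, hC, by norm_num⟩, ?_⟩
  refine (iInf₂_le (2 : ℝ) ⟨_, hinj, 1, 2, hL, hC, by norm_num⟩).trans ?_
  simp

end
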